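/- arXiv:2005.12049 — 4 statements merged into one kernel-verified Lean document; each statement's English description precedes it below -/
import Mathlib

section
/- Gap-insertion preserves the non-crossing property: if π is a non-crossing partition of [n] and α₁,…,α_{n+1} are non-crossing partitions of [k₁],…,[k_{n+1}] (kᵢ ≥ 0, with αᵢ the empty partition when kᵢ = 0), then the gap-insertion composite ρ(π; α₁,…,α_{n+1}) is a non-crossing partition of [n + k₁ + ⋯ + k_{n+1}]. -/
/-!
Write `f j = j + gapShift k j` for the position that the element `j` of `[n]` takes in the
composite (with `f 0 = 0`). Then `f (j + 1) = f j + k j + 1`, so `f` is strictly increasing, and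
the `i`-th inserted partition occupies exactly the open interval `(f i, f (i + 1))`. Thus each
point of `[n + k₀ + ⋯ + k_n]` is either some `f j` with `1 ≤ j ≤ n` or lies in exactly one of these
intervals, and the composite partitions the whole set because `π` and the `α i` partition their
parts.

For a crossing `a < c < b < d`, note that a block coming from a gap lies in an interval free of
the points `f j` and of the other gaps. If either block comes from gap `i`, then the interval hull
of that block meets the other one (`c` lies between `a` and `b`, and `b` between `c` and `d`),
so the other block comes from gap `i` too and `α i` has a crossing. Otherwise both blocks come
from `π`, and monotonicity of `f` yields a crossing of `π`.
-/

/-!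
Preliminaries: set partitions of `[n] = {1,…,n}` encoded as `Finset (Finset ℕ)`,
the non-crossing condition, and the gap-insertion composite `ρ(π; α₁,…,α_{n+1})`.
Gaps are indexed by `0,…,n` (gap `i` sits between the elements `i` and `i+1`,
gap `0` before `1`, gap `n` after `n`).
-/

/-- `π` is a partition of `[n] = {1,…,n}` into nonempty blocks. -/
def IsPartitionOn (n : ℕ) (π : Finset (Finset ℕ)) : Prop :=
  (∀ B ∈ π, B.Nonempty) ∧ (∀ B ∈ π, ∀ x ∈ B, x ∈ Finset.Icc 1 n) ∧
    (∀ x ∈ Finset.Icc 1 n, ∃! B, B ∈ π ∧ x ∈ B)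

/-- `π` is non-crossing: there are no `a < c < b < d` with `a, b` in one block and
`c, d` in a different block. -/
def IsNoncrossing (π : Finset (Finset ℕ)) : Prop :=
  ∀ B ∈ π, ∀ C ∈ π, B ≠ C →
    ∀ a ∈ B, ∀ b ∈ B, ∀ c ∈ C, ∀ d ∈ C, ¬(a < c ∧ c < b ∧ b < d)

/-- `gapShift k m = k₀ + ⋯ + k_{m-1}`, the total size of the partitions inserted in the
gaps strictly before position `m`. -/
def gapShift (k : ℕ → ℕ) (m : ℕ) : ℕ := ∑ l ∈ Finset.range m, k l

/-- The gap-insertion composite `ρ(π; α₀,…,α_n)` of a partition `π` of `[n]` with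
partitions `α i` of `[k i]` (`0 ≤ i ≤ n`, gaps indexed from `0`):
the blocks of `α i` are shifted upward by `i + k₀ + ⋯ + k_{i-1}`, and in the blocks of `π`
each element `j` is replaced by `j + k₀ + ⋯ + k_{j-1}`. -/
def gapInsert (n : ℕ) (k : ℕ → ℕ) (π : Finset (Finset ℕ))
    (α : ℕ → Finset (Finset ℕ)) : Finset (Finset ℕ) :=
  ((Finset.range (n + 1)).biUnion fun i =>
      (α i).image fun B => B.image fun x => x + i + gapShift k i)
    ∪ π.image fun B => B.image fun j => j + gapShift k j

/-- The position in the composite of the element `j` of `[n]`, with `gapPos k 0 = 0`; gap `j`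
occupies the interval strictly between `gapPos k j` and `gapPos k (j + 1)`. -/
def gapPos (k : ℕ → ℕ) (j : ℕ) : ℕ := j + gapShift k j

lemma gapPos_zero (k : ℕ → ℕ) : gapPos k 0 = 0 := by simp [gapPos, gapShift]

lemma gapPos_succ (k : ℕ → ℕ) (j : ℕ) : gapPos k (j + 1) = gapPos k j + k j + 1 := by
  simp only [gapPos, gapShift, Finset.sum_range_succ]
  omega

lemma gapPos_strictMono (k : ℕ → ℕ) : StrictMono (gapPos k) :=
  strictMono_nat_of_lt_succ fun j => by
    rw [gapPos_succ]
    omega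

lemma exists_gapPos_le_lt (k : ℕ → ℕ) {n y : ℕ} (hy : y < gapPos k (n + 1)) :
    ∃ i ≤ n, gapPos k i ≤ y ∧ y < gapPos k (i + 1) := by
  induction n with
  | zero => exact ⟨0, le_rfl, by simp [gapPos_zero], hy⟩
  | succ n ih =>
    by_cases h : y < gapPos k (n + 1)
    · obtain ⟨i, hi, h'⟩ := ih h
      exact ⟨i, by omega, h'⟩
    · exact ⟨n + 1, le_rfl, by omega, hy⟩

/-- Two intervals `[gapPos k i, gapPos k (i + 1))` that share a point have the same index. -/
lemma gapPos_index_unique (k : ℕ → ℕ) {i j y : ℕ}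
    (hi : gapPos k i ≤ y) (hi' : y < gapPos k (i + 1))
    (hj : gapPos k j ≤ y) (hj' : y < gapPos k (j + 1)) : i = j := by
  have h₁ := (gapPos_strictMono k).lt_iff_lt.1 (hi.trans_lt hj')
  have h₂ := (gapPos_strictMono k).lt_iff_lt.1 (hj.trans_lt hi')
  omega

lemma not_gapPos_between (k : ℕ → ℕ) {i j : ℕ}
    (h : gapPos k i < gapPos k j) (h' : gapPos k j < gapPos k (i + 1)) : False := by
  have h₁ := (gapPos_strictMono k).lt_iff_lt.1 h
  have h₂ := (gapPos_strictMono k).lt_iff_lt.1 h'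
  omega

lemma mem_gapInsert {n : ℕ} {k : ℕ → ℕ} {π : Finset (Finset ℕ)} {α : ℕ → Finset (Finset ℕ)}
    {D : Finset ℕ} :
    D ∈ gapInsert n k π α ↔
      (∃ i ≤ n, ∃ A ∈ α i, A.image (fun x => x + gapPos k i) = D) ∨
        ∃ P ∈ π, P.image (gapPos k) = D := by
  simp only [gapInsert, Finset.mem_union, Finset.mem_biUnion, Finset.mem_range, Finset.mem_image,
    Nat.lt_succ_iff, gapPos, ← add_assoc]
  rfl

lemma mem_gap {k : ℕ → ℕ} {i : ℕ} {σ : Finset (Finset ℕ)} (hσ : IsPartitionOn (k i) σ)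
    {A : Finset ℕ} (hA : A ∈ σ) {x : ℕ} (hx : x ∈ A) :
    gapPos k i < x + gapPos k i ∧ x + gapPos k i < gapPos k (i + 1) := by
  have := Finset.mem_Icc.1 (hσ.2.1 A hA x hx)
  rw [gapPos_succ]
  omega

theorem gapInsert_isPartitionOn {n : ℕ} {k : ℕ → ℕ} {π : Finset (Finset ℕ)}
    {α : ℕ → Finset (Finset ℕ)}
    (hπ : IsPartitionOn n π) (hα : ∀ i ≤ n, IsPartitionOn (k i) (α i)) :
    IsPartitionOn (n + gapShift k (n + 1)) (gapInsert n k π α) := by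
  have hN : gapPos k (n + 1) = n + gapShift k (n + 1) + 1 := by
    simp only [gapPos]
    omega
  have mono := gapPos_strictMono k
  refine ⟨fun D hD => ?_, fun D hD y hy => ?_, fun y hy => ?_⟩
  · rcases mem_gapInsert.1 hD with ⟨i, hi, A, hA, rfl⟩ | ⟨P, hP, rfl⟩
    · exact ((hα i hi).1 A hA).image _
    · exact (hπ.1 P hP).image _
  · rw [Finset.mem_Icc]
    rcases mem_gapInsert.1 hD with ⟨i, hi, A, hA, rfl⟩ | ⟨P, hP, rfl⟩
    · obtain ⟨x, hx, rfl⟩ := Finset.mem_image.1 hy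
      have h := mem_gap (hα i hi) hA hx
      have h' : gapPos k (i + 1) ≤ gapPos k (n + 1) := mono.monotone (by omega)
      omega
    · obtain ⟨j, hj, rfl⟩ := Finset.mem_image.1 hy
      have h := Finset.mem_Icc.1 (hπ.2.1 P hP j hj)
      have h' : gapPos k j < gapPos k (n + 1) := mono (by omega)
      have h'' : gapPos k 0 < gapPos k j := mono (by omega)
      omega
  · rw [Finset.mem_Icc] at hy
    obtain ⟨i, hi, hle, hlt⟩ := exists_gapPos_le_lt k (n := n) (y := y) (by omega)
    rcases hle.eq_or_lt with rfl | hgt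
    · have hi1 : 1 ≤ i := by
        rcases Nat.eq_zero_or_pos i with rfl | h
        · rw [gapPos_zero] at hy
          omega
        · exact h
      obtain ⟨P, ⟨hP, hiP⟩, huniq⟩ := hπ.2.2 i (Finset.mem_Icc.2 ⟨hi1, hi⟩)
      refine ⟨P.image (gapPos k), ⟨mem_gapInsert.2 (.inr ⟨P, hP, rfl⟩),
        Finset.mem_image_of_mem _ hiP⟩, ?_⟩
      rintro D ⟨hD, hyD⟩
      rcases mem_gapInsert.1 hD with ⟨j, hj, A, hA, rfl⟩ | ⟨Q, hQ, rfl⟩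
      · obtain ⟨x, hx, hxy⟩ := Finset.mem_image.1 hyD
        have h := mem_gap (hα j hj) hA hx
        simp only [hxy] at h
        exact (not_gapPos_between k h.1 h.2).elim
      · obtain ⟨j, hj, hji⟩ := Finset.mem_image.1 hyD
        obtain rfl := mono.injective hji
        rw [huniq Q ⟨hQ, hj⟩]
    · rw [gapPos_succ] at hlt
      obtain ⟨A, ⟨hA, hyA⟩, huniq⟩ := (hα i hi).2.2 (y - gapPos k i)
        (Finset.mem_Icc.2 ⟨by omega, by omega⟩)
      rw [← gapPos_succ] at hlt
      refine ⟨A.image (fun x => x + gapPos k i), ⟨mem_gapInsert.2 (.inl ⟨i, hi, A, hA, rfl⟩),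
        Finset.mem_image.2 ⟨_, hyA, by omega⟩⟩, ?_⟩
      rintro D ⟨hD, hyD⟩
      rcases mem_gapInsert.1 hD with ⟨j, hj, A', hA', rfl⟩ | ⟨Q, hQ, rfl⟩
      · obtain ⟨x, hx, rfl⟩ := Finset.mem_image.1 hyD
        have h := mem_gap (hα j hj) hA' hx
        obtain rfl := gapPos_index_unique k hle hlt h.1.le h.2
        rw [huniq A' ⟨hA', by simpa using hx⟩]
      · obtain ⟨j, hj, rfl⟩ := Finset.mem_image.1 hyD
        exact (not_gapPos_between k hgt hlt).elim

/-- Gap-insertion preserves the non-crossing property: if `π` is a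
non-crossing partition of `[n]` and each `α i` is a non-crossing partition of `[k i]`,
then `ρ(π; α₀,…,α_n)` is a non-crossing partition of `[n + k₀ + ⋯ + k_n]`. -/
theorem gapInsert_noncrossing (n : ℕ) (k : ℕ → ℕ) (π : Finset (Finset ℕ))
    (α : ℕ → Finset (Finset ℕ))
    (hπ : IsPartitionOn n π) (hπnc : IsNoncrossing π)
    (hα : ∀ i ≤ n, IsPartitionOn (k i) (α i))
    (hαnc : ∀ i ≤ n, IsNoncrossing (α i)) :
    IsPartitionOn (n + gapShift k (n + 1)) (gapInsert n k π α) ∧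
      IsNoncrossing (gapInsert n k π α) := by
  refine ⟨gapInsert_isPartitionOn hπ hα, ?_⟩
  have mono := gapPos_strictMono k
  rintro B hB C hC hne a ha b hb c hc d hd ⟨hac, hcb, hbd⟩
  rcases mem_gapInsert.1 hB with ⟨i, hi, A, hA, rfl⟩ | ⟨P, hP, rfl⟩ <;>
    rcases mem_gapInsert.1 hC with ⟨j, hj, A', hA', rfl⟩ | ⟨Q, hQ, rfl⟩ <;>
    obtain ⟨a, ha', rfl⟩ := Finset.mem_image.1 ha <;>
    obtain ⟨b, hb', rfl⟩ := Finset.mem_image.1 hb <;>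
    obtain ⟨c, hc', rfl⟩ := Finset.mem_image.1 hc <;>
    obtain ⟨d, hd', rfl⟩ := Finset.mem_image.1 hd
  · have h₁ := mem_gap (hα i hi) hA ha'
    have h₂ := mem_gap (hα i hi) hA hb'
    have h₃ := mem_gap (hα j hj) hA' hc'
    -- The point of `C` between two points of `B` lies in gap `i` as well.
    obtain rfl := gapPos_index_unique k (h₁.1.trans hac).le (hcb.trans h₂.2) h₃.1.le h₃.2
    exact hαnc i hi A hA A' hA' (fun h => hne (by rw [h])) a ha' b hb' c hc' d hd'
      ⟨by simpa using hac, by simpa using hcb, by simpa using hbd⟩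
  · exact not_gapPos_between k ((mem_gap (hα i hi) hA ha').1.trans hac)
      (hcb.trans (mem_gap (hα i hi) hA hb').2)
  · exact not_gapPos_between k ((mem_gap (hα j hj) hA' hc').1.trans hcb)
      (hbd.trans (mem_gap (hα j hj) hA' hd').2)
  · exact hπnc P hP Q hQ (fun h => hne (by rw [h])) a ha' b hb' c hc' d hd'
      ⟨mono.lt_iff_lt.1 hac, mono.lt_iff_lt.1 hcb, mono.lt_iff_lt.1 hbd⟩
end

section
/- The one-block partitions generate the gap-insertion operad of non-crossing partitions: the smallest collection of non-crossing partitions that contains the empty partition ∅ and all one-block partitions 1_{k+1} = {[1,k]} (k ≥ 1) and is closed under gap-insertion composition contains every non-crossing partition of [n] for every n ≥ 0. -/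
/-- The one-block partition `1_{k+1} = {[1,k]}` of `[k]`. -/
def oneBlock (k : ℕ) : Finset (Finset ℕ) := {Finset.Icc 1 k}

/-- The blocks of `π` lying in the open interval `(a, b)`, translated down by `a`. -/
def restrictGap (π : Finset (Finset ℕ)) (a b : ℕ) : Finset (Finset ℕ) :=
  (π.filter fun B => B ⊆ Finset.Ioo a b).image fun B => B.image fun x => x - a

theorem mem_restrictGap {π : Finset (Finset ℕ)} {a b : ℕ} {C : Finset ℕ} :
    C ∈ restrictGap π a b ↔
      ∃ B ∈ π, B ⊆ Finset.Ioo a b ∧ B.image (fun x => x - a) = C := by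
  simp [restrictGap, and_assoc]

theorem mem_image_sub {B : Finset ℕ} {a b y : ℕ} (hB : B ⊆ Finset.Ioo a b) :
    y ∈ B.image (fun x => x - a) ↔ y + a ∈ B ∧ 0 < y := by
  constructor
  · intro h
    obtain ⟨x, hx, rfl⟩ := Finset.mem_image.1 h
    have := Finset.mem_Ioo.1 (hB hx)
    have e : x - a + a = x := by omega
    rw [e]
    exact ⟨hx, by omega⟩
  · rintro ⟨h, -⟩
    exact Finset.mem_image.2 ⟨y + a, h, by omega⟩

/-- Enumeration of a set of positive integers below `N` by a strictly increasing sequence with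
sentinels `v 0 = 0` and `v (m + 1) = N`. The values of `v` past `m + 1` are irrelevant, but taking
`v` strictly increasing everywhere avoids side conditions. -/
theorem exists_enum (V : Finset ℕ) :
    ∀ N, 1 ≤ N → (∀ x ∈ V, 1 ≤ x ∧ x < N) →
      ∃ (m : ℕ) (v : ℕ → ℕ), StrictMono v ∧ v 0 = 0 ∧ v (m + 1) = N ∧
        V = (Finset.Icc 1 m).image v := by
  induction V using Finset.induction_on_max with
  | empty =>
    intro N hN _
    refine ⟨0, fun i => if i = 0 then 0 else N + i - 1, ?_, by simp, by simp, by simp⟩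
    refine strictMono_nat_of_lt_succ fun i => ?_
    change (if i = 0 then 0 else N + i - 1) < if i + 1 = 0 then 0 else N + (i + 1) - 1
    rw [if_neg (Nat.succ_ne_zero i)]
    split_ifs <;> omega
  | insert a V hlt ih =>
    intro N hN hV
    have ha := hV a (Finset.mem_insert_self _ _)
    obtain ⟨m, v, hv, h0, hm, hVe⟩ := ih a ha.1 fun x hx =>
      ⟨(hV x (Finset.mem_insert_of_mem hx)).1, hlt x hx⟩
    refine ⟨m + 1, fun i => if i ≤ m + 1 then v i else N + i - (m + 2), ?_, by simp [h0],
      by simp, ?_⟩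
    · refine strictMono_nat_of_lt_succ fun i => ?_
      have h1 := hv (Nat.lt_succ_self i)
      have h2 : i ≤ m + 1 → v i ≤ a := fun h => hm ▸ hv.monotone h
      split_ifs with h3 h4
      · exact h1
      · have := h2 h3
        omega
      · omega
      · omega
    · have hI : Finset.Icc 1 (m + 1) = insert (m + 1) (Finset.Icc 1 m) := by
        ext x
        simp only [Finset.mem_Icc, Finset.mem_insert]
        omega
      rw [hI, Finset.image_insert, hVe]
      congr 1
      · simp [hm]
      · refine Finset.image_congr fun x hx => ?_
        have := Finset.mem_Icc.1 hx
        rw [if_pos (by omega)]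

/-- The position of the `j`-th element of the outer partition after insertion into the gaps. -/
theorem gapShift_add {v : ℕ → ℕ} (hv : StrictMono v) (h0 : v 0 = 0) (j : ℕ) :
    gapShift (fun i => v (i + 1) - v i - 1) j + j = v j := by
  induction j with
  | zero => simp [gapShift, h0]
  | succ j ih =>
    have := hv (Nat.lt_succ_self j)
    simp only [gapShift, Finset.sum_range_succ] at ih ⊢
    simp only [Nat.succ_eq_add_one] at this
    omega

theorem isPartitionOn_restrictGap {n a b : ℕ} {π : Finset (Finset ℕ)} (hπ : IsPartitionOn n π)
    (hb : b ≤ n + 1)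
    (hgap : ∀ B ∈ π, ∀ x ∈ B, x ∈ Finset.Ioo a b → B ⊆ Finset.Ioo a b) :
    IsPartitionOn (b - a - 1) (restrictGap π a b) := by
  obtain ⟨hne, -, huniq⟩ := hπ
  refine ⟨?_, ?_, ?_⟩
  · intro C hC
    obtain ⟨B, hB, -, rfl⟩ := mem_restrictGap.1 hC
    exact (hne B hB).image _
  · intro C hC y hy
    obtain ⟨B, hB, hBs, rfl⟩ := mem_restrictGap.1 hC
    have h := (mem_image_sub hBs).1 hy
    have := Finset.mem_Ioo.1 (hBs h.1)
    exact Finset.mem_Icc.2 (by omega)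
  · intro y hy
    have hy' := Finset.mem_Icc.1 hy
    obtain ⟨B, ⟨hB, hyB⟩, hBu⟩ := huniq (y + a) (Finset.mem_Icc.2 (by omega))
    have hBs := hgap B hB _ hyB (Finset.mem_Ioo.2 (by omega))
    refine ⟨_, ⟨mem_restrictGap.2 ⟨B, hB, hBs, rfl⟩, (mem_image_sub hBs).2 ⟨hyB, by omega⟩⟩, ?_⟩
    rintro C ⟨hC, hyC⟩
    obtain ⟨B', hB', hBs', rfl⟩ := mem_restrictGap.1 hC
    rw [hBu B' ⟨hB', ((mem_image_sub hBs').1 hyC).1⟩]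

theorem isNoncrossing_restrictGap {π : Finset (Finset ℕ)} (hπ : IsNoncrossing π) (a b : ℕ) :
    IsNoncrossing (restrictGap π a b) := by
  intro C hC D hD hne p hp q hq r hr s hs hlt
  obtain ⟨B, hB, hBs, rfl⟩ := mem_restrictGap.1 hC
  obtain ⟨B', hB', hBs', rfl⟩ := mem_restrictGap.1 hD
  rw [mem_image_sub hBs] at hp hq
  rw [mem_image_sub hBs'] at hr hs
  refine hπ B hB B' hB' (fun h => hne (by rw [h])) _ hp.1 _ hq.1 _ hr.1 _ hs.1 ?_
  omega

/-- A strictly increasing sequence starting at `0` cuts `[0, v (m + 1))` into half-open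
intervals. -/
theorem exists_index_between {v : ℕ → ℕ} (h0 : v 0 = 0) (m x : ℕ) (hx : x < v (m + 1)) :
    ∃ i ≤ m, v i ≤ x ∧ x < v (i + 1) := by
  induction m with
  | zero => exact ⟨0, le_rfl, by omega, hx⟩
  | succ m ih =>
    by_cases h : x < v (m + 1)
    · obtain ⟨i, hi, h'⟩ := ih h
      exact ⟨i, by omega, h'⟩
    · exact ⟨m + 1, le_rfl, by omega, hx⟩

/-- In a non-crossing partition, a block that has a point in the `i`-th gap of the block
`V = {v 1, …, v m}` containing `1` lies entirely in that gap. -/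
theorem exists_gap {n m : ℕ} {π : Finset (Finset ℕ)} (hπ : IsPartitionOn n π)
    (hnc : IsNoncrossing π) {V : Finset ℕ} (hV : V ∈ π) (h1 : 1 ∈ V) {v : ℕ → ℕ}
    (hv : StrictMono v) (hm : v (m + 1) = n + 1) (hVe : V = (Finset.Icc 1 m).image v)
    (hv1 : v 1 = 1) {i : ℕ} (hi : i ≤ m) {B : Finset ℕ} (hB : B ∈ π) {x : ℕ} (hx : x ∈ B)
    (hxi : x ∈ Finset.Ioo (v i) (v (i + 1))) : B ⊆ Finset.Ioo (v i) (v (i + 1)) := by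
  have hvV : ∀ j, 1 ≤ j → j ≤ m → v j ∈ V := fun j h h' => by
    rw [hVe]
    exact Finset.mem_image_of_mem _ (Finset.mem_Icc.2 ⟨h, h'⟩)
  rw [Finset.mem_Ioo] at hxi
  have hx1 := Finset.mem_Icc.1 (hπ.2.1 B hB x hx)
  have hi1 : 1 ≤ i := by
    by_contra h
    obtain rfl : i = 0 := by omega
    simp only [zero_add, hv1] at hxi
    omega
  have hxV : x ∉ V := by
    rw [hVe]
    intro h
    obtain ⟨j, -, rfl⟩ := Finset.mem_image.1 h
    have h2 := hv.lt_iff_lt.1 hxi.1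
    have h3 := hv.lt_iff_lt.1 hxi.2
    omega
  have hne : V ≠ B := fun h => hxV (h ▸ hx)
  intro y hy
  have hy1 := Finset.mem_Icc.1 (hπ.2.1 B hB y hy)
  have hyV : ∀ z ∈ V, y ≠ z := by
    rintro z hz rfl
    obtain ⟨_, -, hu⟩ := hπ.2.2 y (Finset.mem_Icc.2 hy1)
    exact hne ((hu V ⟨hV, hz⟩).trans (hu B ⟨hB, hy⟩).symm)
  have hyi := hyV _ (hvV i hi1 hi)
  have hy1' := hyV 1 h1
  rw [Finset.mem_Ioo]
  constructor
  · by_contra h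
    exact hnc V hV B hB hne 1 h1 _ (hvV i hi1 hi) y hy x hx (by omega)
  · by_contra h
    have him : i + 1 ≤ m := by
      by_contra h'
      obtain rfl : i = m := by omega
      omega
    have hyi' := hyV _ (hvV (i + 1) (by omega) him)
    exact hnc V hV B hB hne _ (hvV i hi1 hi) _ (hvV (i + 1) (by omega) him) x hx y hy (by omega)

theorem isPartitionOn_oneBlock {m : ℕ} (hm : 1 ≤ m) : IsPartitionOn m (oneBlock m) := by
  refine ⟨?_, ?_, ?_⟩
  · simp [oneBlock, hm]
  · simp [oneBlock]
  · intro x hx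
    exact ⟨Finset.Icc 1 m, ⟨by simp [oneBlock], hx⟩, fun C hC => by simpa [oneBlock] using hC.1⟩

theorem isNoncrossing_oneBlock (m : ℕ) : IsNoncrossing (oneBlock m) := by
  intro B hB C hC hne
  simp only [oneBlock, Finset.mem_singleton] at hB hC
  exact absurd (hB.trans hC.symm) hne

/-- The one-block partitions generate the gap-insertion operad of
non-crossing partitions: any collection `S` of partitions that contains the empty
partition `∅` (as a partition of `[0]`) and all one-block partitions `1_{k+1}` (`k ≥ 1`),
and is closed under gap-insertion composition of non-crossing partitions, contains
every non-crossing partition of `[n]` for every `n ≥ 0`. -/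
theorem oneBlocks_generate_gapInsertion_operad
    (S : ℕ → Set (Finset (Finset ℕ)))
    (hempty : (∅ : Finset (Finset ℕ)) ∈ S 0)
    (hone : ∀ k, 1 ≤ k → oneBlock k ∈ S k)
    (hclosed : ∀ (n : ℕ) (k : ℕ → ℕ) (π : Finset (Finset ℕ))
        (α : ℕ → Finset (Finset ℕ)),
      π ∈ S n → IsPartitionOn n π → IsNoncrossing π →
      (∀ i ≤ n, α i ∈ S (k i) ∧ IsPartitionOn (k i) (α i) ∧ IsNoncrossing (α i)) →
      gapInsert n k π α ∈ S (n + gapShift k (n + 1))) :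
    ∀ (n : ℕ) (π : Finset (Finset ℕ)),
      IsPartitionOn n π → IsNoncrossing π → π ∈ S n := by
  intro n
  induction n using Nat.strong_induction_on with
  | _ n ih =>
  intro π hπ hnc
  obtain rfl | hn := Nat.eq_zero_or_pos n
  · have : π = ∅ := by
      refine Finset.eq_empty_of_forall_notMem fun B hB => ?_
      obtain ⟨x, hx⟩ := hπ.1 B hB
      simpa using hπ.2.1 B hB x hx
    exact this ▸ hempty
  obtain ⟨V, ⟨hV, h1⟩, -⟩ := hπ.2.2 1 (Finset.mem_Icc.2 ⟨le_rfl, hn⟩)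
  obtain ⟨m, v, hv, h0, hm, hVe⟩ := exists_enum V (n + 1) (by omega) fun x hx => by
    have := Finset.mem_Icc.1 (hπ.2.1 V hV x hx)
    omega
  obtain ⟨hm1, hv1⟩ : 1 ≤ m ∧ v 1 = 1 := by
    rw [hVe] at h1
    obtain ⟨j, hj, hj1⟩ := Finset.mem_image.1 h1
    have hj' := Finset.mem_Icc.1 hj
    have := hv.monotone hj'.1
    have := hv Nat.zero_lt_one
    omega
  have hgap := fun i (hi : i ≤ m) B (hB : B ∈ π) x (hx : x ∈ B) hxi =>
    exists_gap hπ hnc hV h1 hv hm hVe hv1 hi hB (x := x) hx hxi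
  have hshift := gapShift_add hv h0
  have key := hclosed m (fun i => v (i + 1) - v i - 1) (oneBlock m)
    (fun i => restrictGap π (v i) (v (i + 1))) (hone m hm1) (isPartitionOn_oneBlock hm1)
    (isNoncrossing_oneBlock m) (fun i hi => by
      have hle : v (i + 1) ≤ n + 1 := hm ▸ hv.monotone (by omega)
      have hp := isPartitionOn_restrictGap hπ hle (hgap i hi)
      have hc := isNoncrossing_restrictGap hnc (v i) (v (i + 1))
      refine ⟨ih _ ?_ _ hp hc, hp, hc⟩
      -- The gap before `v 1 = 1` is empty; every other gap misses `1`.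
      obtain rfl | hi0 := Nat.eq_zero_or_pos i
      · simp only [zero_add, hv1]
        omega
      · have := hv.monotone (show 1 ≤ i from hi0)
        omega)
  have hsize : m + gapShift (fun i => v (i + 1) - v i - 1) (m + 1) = n := by
    have := hshift (m + 1)
    omega
  rw [hsize] at key
  convert key using 1
  have hback : ∀ i, ∀ B ⊆ Finset.Ioo (v i) (v (i + 1)),
      ((B.image fun x => x - v i).image fun x =>
        x + i + gapShift (fun i => v (i + 1) - v i - 1) i) = B := by
    intro i B hB
    rw [Finset.image_image]
    conv_rhs => rw [← Finset.image_id (s := B)]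
    refine Finset.image_congr fun x hx => ?_
    have := Finset.mem_Ioo.1 (hB hx)
    have := hshift i
    simp only [Function.comp, id]
    omega
  have hVimg : ((Finset.Icc 1 m).image fun j =>
      j + gapShift (fun i => v (i + 1) - v i - 1) j) = V := by
    rw [hVe]
    refine Finset.image_congr fun j _ => ?_
    have := hshift j
    omega
  ext B
  simp only [gapInsert, oneBlock, Finset.image_singleton, hVimg, Finset.mem_union,
    Finset.mem_biUnion, Finset.mem_range, Finset.mem_singleton]
  constructor
  · intro hB
    by_cases hBV : B = V
    · exact Or.inr hBV
    left
    obtain ⟨x, hx⟩ := hπ.1 B hB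
    have hxn := Finset.mem_Icc.1 (hπ.2.1 B hB x hx)
    have hxV : x ∉ V := fun h => by
      obtain ⟨_, -, hu⟩ := hπ.2.2 x (Finset.mem_Icc.2 hxn)
      exact hBV ((hu B ⟨hB, hx⟩).trans (hu V ⟨hV, h⟩).symm)
    obtain ⟨i, hi, hle, hlt⟩ := exists_index_between h0 m x (by omega)
    have hxi : v i ≠ x := by
      rintro rfl
      obtain rfl | hi0 := Nat.eq_zero_or_pos i
      · omega
      · exact hxV (hVe ▸ Finset.mem_image_of_mem _ (Finset.mem_Icc.2 ⟨hi0, hi⟩))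
    have hBs := hgap i hi B hB x hx (Finset.mem_Ioo.2 (by omega))
    exact ⟨i, by omega, Finset.mem_image.2
      ⟨_, mem_restrictGap.2 ⟨B, hB, hBs, rfl⟩, hback i B hBs⟩⟩
  · rintro (⟨i, -, h⟩ | rfl)
    · obtain ⟨C, hC, rfl⟩ := Finset.mem_image.1 h
      obtain ⟨D, hD, hDs, rfl⟩ := mem_restrictGap.1 hC
      rwa [hback i D hDs]
    · exact hV
end

section
/- Duoidal exchange law for bicollections: for any four bicollections C₁, C₂, C₃, C₄, there is a well-defined linear map of bicollections R : (C₁ ⊠ C₂) ⊗ (C₃ ⊠ C₄) → (C₁ ⊗ C₃) ⊠ (C₂ ⊗ C₄) determined on homogeneous tensors by R((p₁ ⊠ p₂) ⊗ (p₃ ⊠ p₄)) = (p₁ ⊗ p₃) ⊠ (p₂ ⊗ p₄) for pᵢ ∈ Cᵢ(nᵢ, mᵢ) with m₁ = n₂ and m₃ = n₄, and R is injective. -/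
/-!
Tensor products distribute over direct sums, so the source of the exchange map in bidegree `(n,m)`
is the direct sum, over `n₁ + n₂ = n`, `m₁ + m₂ = m` and `k`, `l`, of
`(C₁(n₁,k) ⊗ C₂(k,m₁)) ⊗ (C₃(n₂,l) ⊗ C₄(l,m₂))`. The target is the direct sum of
`(C₁(n₁,k) ⊗ C₃(n₂,l)) ⊗ (C₂(k',m₁) ⊗ C₄(l',m₂))` over the same outer degrees and over all
`k`, `l`, `k'`, `l'` with `k + l = k' + l'`. The exchange map identifies the source with the partial
sum of the summands with `k = k'` and `l = l'`, by permuting tensor factors. It is therefore split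
injective: projecting away the remaining summands and permuting back is a left inverse
(`retract_comp_exchange`).
-/

open scoped TensorProduct DirectSum

namespace Bicollection

variable (C₁ C₂ C₃ C₄ : ℕ → ℕ → Type*)
variable [∀ n m, AddCommGroup (C₁ n m)] [∀ n m, Module ℂ (C₁ n m)]
variable [∀ n m, AddCommGroup (C₂ n m)] [∀ n m, Module ℂ (C₂ n m)]
variable [∀ n m, AddCommGroup (C₃ n m)] [∀ n m, Module ℂ (C₃ n m)]
variable [∀ n m, AddCommGroup (C₄ n m)] [∀ n m, Module ℂ (C₄ n m)]

/-- The vertical tensor product of two bicollections: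
`(P ⊠ Q)(n,m) = ⊕_k P(n,k) ⊗ Q(k,m)`. -/
def Vert (P Q : ℕ → ℕ → Type*)
    [∀ n m, AddCommGroup (P n m)] [∀ n m, Module ℂ (P n m)]
    [∀ n m, AddCommGroup (Q n m)] [∀ n m, Module ℂ (Q n m)]
    (n m : ℕ) : Type _ :=
  ⨁ k : ℕ, (P n k ⊗[ℂ] Q k m)

noncomputable instance (P Q : ℕ → ℕ → Type*)
    [∀ n m, AddCommGroup (P n m)] [∀ n m, Module ℂ (P n m)]
    [∀ n m, AddCommGroup (Q n m)] [∀ n m, Module ℂ (Q n m)]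
    (n m : ℕ) : AddCommGroup (Vert P Q n m) := by
  unfold Vert; infer_instance

noncomputable instance (P Q : ℕ → ℕ → Type*)
    [∀ n m, AddCommGroup (P n m)] [∀ n m, Module ℂ (P n m)]
    [∀ n m, AddCommGroup (Q n m)] [∀ n m, Module ℂ (Q n m)]
    (n m : ℕ) : Module ℂ (Vert P Q n m) := by
  unfold Vert; infer_instance

/-- The inclusion of the homogeneous piece `P(n,k) ⊗ Q(k,m)` into `(P ⊠ Q)(n,m)`. -/
noncomputable def vof (P Q : ℕ → ℕ → Type*)
    [∀ n m, AddCommGroup (P n m)] [∀ n m, Module ℂ (P n m)]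
    [∀ n m, AddCommGroup (Q n m)] [∀ n m, Module ℂ (Q n m)]
    (n k m : ℕ) : (P n k ⊗[ℂ] Q k m) →ₗ[ℂ] Vert P Q n m :=
  DirectSum.lof ℂ ℕ (fun k => P n k ⊗[ℂ] Q k m) k

/-- Index set for the horizontal tensor product in bidegree `(n, m)`:
pairs of bidegrees `((n₁,m₁),(n₂,m₂))` with `n₁+n₂ = n` and `m₁+m₂ = m`. -/
def HIdx (n m : ℕ) : Type :=
  {x : (ℕ × ℕ) × (ℕ × ℕ) // x.1.1 + x.2.1 = n ∧ x.1.2 + x.2.2 = m}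

instance (n m : ℕ) : DecidableEq (HIdx n m) := by
  unfold HIdx; infer_instance

/-- The horizontal tensor product of two bicollections:
`(P ⊗ Q)(n,m) = ⊕_{n₁+n₂=n, m₁+m₂=m} P(n₁,m₁) ⊗ Q(n₂,m₂)`. -/
def Horiz (P Q : ℕ → ℕ → Type*)
    [∀ n m, AddCommGroup (P n m)] [∀ n m, Module ℂ (P n m)]
    [∀ n m, AddCommGroup (Q n m)] [∀ n m, Module ℂ (Q n m)]
    (n m : ℕ) : Type _ :=
  ⨁ x : HIdx n m, (P x.1.1.1 x.1.1.2 ⊗[ℂ] Q x.1.2.1 x.1.2.2)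

noncomputable instance (P Q : ℕ → ℕ → Type*)
    [∀ n m, AddCommGroup (P n m)] [∀ n m, Module ℂ (P n m)]
    [∀ n m, AddCommGroup (Q n m)] [∀ n m, Module ℂ (Q n m)]
    (n m : ℕ) : AddCommGroup (Horiz P Q n m) := by
  unfold Horiz; infer_instance

noncomputable instance (P Q : ℕ → ℕ → Type*)
    [∀ n m, AddCommGroup (P n m)] [∀ n m, Module ℂ (P n m)]
    [∀ n m, AddCommGroup (Q n m)] [∀ n m, Module ℂ (Q n m)]
    (n m : ℕ) : Module ℂ (Horiz P Q n m) := by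
  unfold Horiz; infer_instance

/-- The inclusion of the homogeneous piece `P(n₁,m₁) ⊗ Q(n₂,m₂)` into `(P ⊗ Q)(n₁+n₂, m₁+m₂)`. -/
noncomputable def hof (P Q : ℕ → ℕ → Type*)
    [∀ n m, AddCommGroup (P n m)] [∀ n m, Module ℂ (P n m)]
    [∀ n m, AddCommGroup (Q n m)] [∀ n m, Module ℂ (Q n m)]
    (n₁ m₁ n₂ m₂ : ℕ) :
    (P n₁ m₁ ⊗[ℂ] Q n₂ m₂) →ₗ[ℂ] Horiz P Q (n₁ + n₂) (m₁ + m₂) :=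
  DirectSum.lof ℂ (HIdx (n₁ + n₂) (m₁ + m₂))
    (fun x => P x.1.1.1 x.1.1.2 ⊗[ℂ] Q x.1.2.1 x.1.2.2)
    ⟨((n₁, m₁), (n₂, m₂)), rfl, rfl⟩

/-! ### Bilinear maps out of direct sums -/

section DirectSumTensor

variable {ι κ : Type*} [DecidableEq ι] [DecidableEq κ] {A : ι → Type*} {B : κ → Type*} {M : Type*}
  [∀ i, AddCommGroup (A i)] [∀ i, Module ℂ (A i)]
  [∀ j, AddCommGroup (B j)] [∀ j, Module ℂ (B j)] [AddCommGroup M] [Module ℂ M]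

/-- The linear map `(⨁ᵢ Aᵢ) ⊗ (⨁ⱼ Bⱼ) → M` with prescribed restrictions to the summands
`Aᵢ ⊗ Bⱼ`. -/
noncomputable def sumTensorLift (f : ∀ i j, A i ⊗[ℂ] B j →ₗ[ℂ] M) :
    (⨁ i, A i) ⊗[ℂ] (⨁ j, B j) →ₗ[ℂ] M :=
  TensorProduct.lift <| DirectSum.toModule ℂ ι _ fun i =>
    LinearMap.flip <| DirectSum.toModule ℂ κ _ fun j =>
      LinearMap.flip <| TensorProduct.curry (f i j)

lemma sumTensorLift_lof (f : ∀ i j, A i ⊗[ℂ] B j →ₗ[ℂ] M) (i : ι) (j : κ) (a : A i) (b : B j) :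
    sumTensorLift f (DirectSum.lof ℂ ι A i a ⊗ₜ[ℂ] DirectSum.lof ℂ κ B j b) = f i j (a ⊗ₜ b) := by
  simp [sumTensorLift, DirectSum.toModule_lof]

lemma sumTensor_hom_ext {f g : (⨁ i, A i) ⊗[ℂ] (⨁ j, B j) →ₗ[ℂ] M}
    (h : ∀ i j (a : A i) (b : B j),
      f (DirectSum.lof ℂ ι A i a ⊗ₜ[ℂ] DirectSum.lof ℂ κ B j b) =
        g (DirectSum.lof ℂ ι A i a ⊗ₜ[ℂ] DirectSum.lof ℂ κ B j b)) : f = g := by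
  apply TensorProduct.ext
  refine DirectSum.linearMap_ext ℂ fun i => LinearMap.ext fun a => ?_
  exact DirectSum.linearMap_ext ℂ fun j => LinearMap.ext fun b => h i j a b

end DirectSumTensor

/-! ### Horizontal and vertical products -/

section Products

variable (P Q P' Q' : ℕ → ℕ → Type*)
  [∀ n m, AddCommGroup (P n m)] [∀ n m, Module ℂ (P n m)]
  [∀ n m, AddCommGroup (Q n m)] [∀ n m, Module ℂ (Q n m)]
  [∀ n m, AddCommGroup (P' n m)] [∀ n m, Module ℂ (P' n m)]
  [∀ n m, AddCommGroup (Q' n m)] [∀ n m, Module ℂ (Q' n m)]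

/-- The inclusion of the summand of `(P ⊗ Q)(n,m)` with index `x`. Unlike `hof`, it lets `n` and
`m` be only propositionally equal to the sums of the bidegrees. -/
noncomputable def hinc {n m : ℕ} (x : HIdx n m) :
    (P x.1.1.1 x.1.1.2 ⊗[ℂ] Q x.1.2.1 x.1.2.2) →ₗ[ℂ] Horiz P Q n m :=
  DirectSum.lof ℂ (HIdx n m) (fun x => P x.1.1.1 x.1.1.2 ⊗[ℂ] Q x.1.2.1 x.1.2.2) x

variable {P Q P' Q'} {M : Type*} [AddCommGroup M] [Module ℂ M]

/-- A linear map out of `(P ⊗ Q)(n,m)` given by its restrictions to the summands. -/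
noncomputable def horizLift {n m : ℕ}
    (f : ∀ x : HIdx n m, P x.1.1.1 x.1.1.2 ⊗[ℂ] Q x.1.2.1 x.1.2.2 →ₗ[ℂ] M) :
    Horiz P Q n m →ₗ[ℂ] M :=
  DirectSum.toModule ℂ (HIdx n m) M f

lemma horizLift_hinc {n m : ℕ}
    (f : ∀ x : HIdx n m, P x.1.1.1 x.1.1.2 ⊗[ℂ] Q x.1.2.1 x.1.2.2 →ₗ[ℂ] M) (x : HIdx n m)
    (t : P x.1.1.1 x.1.1.2 ⊗[ℂ] Q x.1.2.1 x.1.2.2) :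
    horizLift f (hinc P Q x t) = f x t :=
  DirectSum.toModule_lof (R := ℂ) (ι := HIdx n m)
    (M := fun x => P x.1.1.1 x.1.1.2 ⊗[ℂ] Q x.1.2.1 x.1.2.2) (φ := f) x t

lemma horiz_hom_ext {n m : ℕ} {f g : Horiz P Q n m →ₗ[ℂ] M}
    (h : ∀ x : HIdx n m, f ∘ₗ hinc P Q x = g ∘ₗ hinc P Q x) : f = g :=
  DirectSum.linearMap_ext ℂ h

/-- A linear map out of `(P ⊠ Q)(n,m)` given by its restrictions to the summands. -/
noncomputable def vertLift {n m : ℕ} (f : ∀ k : ℕ, P n k ⊗[ℂ] Q k m →ₗ[ℂ] M) :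
    Vert P Q n m →ₗ[ℂ] M :=
  DirectSum.toModule ℂ ℕ M f

lemma vertLift_vof {n m : ℕ} (f : ∀ k : ℕ, P n k ⊗[ℂ] Q k m →ₗ[ℂ] M) (k : ℕ)
    (t : P n k ⊗[ℂ] Q k m) : vertLift f (vof P Q n k m t) = f k t :=
  DirectSum.toModule_lof (R := ℂ) (ι := ℕ) (M := fun k => P n k ⊗[ℂ] Q k m) (φ := f) k t

/-- `sumTensorLift` for a tensor product of two vertical products. -/
noncomputable def vertTensorLift {n m n' m' : ℕ}
    (f : ∀ k l : ℕ, (P n k ⊗[ℂ] Q k m) ⊗[ℂ] (P' n' l ⊗[ℂ] Q' l m') →ₗ[ℂ] M) :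
    Vert P Q n m ⊗[ℂ] Vert P' Q' n' m' →ₗ[ℂ] M :=
  sumTensorLift f

lemma vertTensorLift_vof {n m n' m' : ℕ}
    (f : ∀ k l : ℕ, (P n k ⊗[ℂ] Q k m) ⊗[ℂ] (P' n' l ⊗[ℂ] Q' l m') →ₗ[ℂ] M) (k l : ℕ)
    (s : P n k ⊗[ℂ] Q k m) (t : P' n' l ⊗[ℂ] Q' l m') :
    vertTensorLift f (vof P Q n k m s ⊗ₜ[ℂ] vof P' Q' n' l m' t) = f k l (s ⊗ₜ t) :=
  sumTensorLift_lof f k l s t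

lemma vertTensor_hom_ext {n m n' m' : ℕ}
    {f g : Vert P Q n m ⊗[ℂ] Vert P' Q' n' m' →ₗ[ℂ] M}
    (h : ∀ k l (p : P n k) (q : Q k m) (p' : P' n' l) (q' : Q' l m'),
      f (vof P Q n k m (p ⊗ₜ q) ⊗ₜ[ℂ] vof P' Q' n' l m' (p' ⊗ₜ q')) =
        g (vof P Q n k m (p ⊗ₜ q) ⊗ₜ[ℂ] vof P' Q' n' l m' (p' ⊗ₜ q'))) : f = g := by
  refine sumTensor_hom_ext fun k l s t => ?_
  have key : f ∘ₗ TensorProduct.map (vof P Q n k m) (vof P' Q' n' l m') =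
      g ∘ₗ TensorProduct.map (vof P Q n k m) (vof P' Q' n' l m') :=
    TensorProduct.ext_fourfold' fun p q p' q' => h k l p q p' q'
  exact LinearMap.congr_fun key (s ⊗ₜ t)

/-- `sumTensorLift` for a tensor product of two horizontal products. -/
noncomputable def horizTensorLift {n m n' m' : ℕ}
    (f : ∀ (y : HIdx n m) (z : HIdx n' m'), (P y.1.1.1 y.1.1.2 ⊗[ℂ] Q y.1.2.1 y.1.2.2) ⊗[ℂ]
      (P' z.1.1.1 z.1.1.2 ⊗[ℂ] Q' z.1.2.1 z.1.2.2) →ₗ[ℂ] M) :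
    Horiz P Q n m ⊗[ℂ] Horiz P' Q' n' m' →ₗ[ℂ] M :=
  sumTensorLift f

lemma horizTensorLift_hinc {n m n' m' : ℕ}
    (f : ∀ (y : HIdx n m) (z : HIdx n' m'), (P y.1.1.1 y.1.1.2 ⊗[ℂ] Q y.1.2.1 y.1.2.2) ⊗[ℂ]
      (P' z.1.1.1 z.1.1.2 ⊗[ℂ] Q' z.1.2.1 z.1.2.2) →ₗ[ℂ] M) (y : HIdx n m) (z : HIdx n' m')
    (s : P y.1.1.1 y.1.1.2 ⊗[ℂ] Q y.1.2.1 y.1.2.2)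
    (t : P' z.1.1.1 z.1.1.2 ⊗[ℂ] Q' z.1.2.1 z.1.2.2) :
    horizTensorLift f (hinc P Q y s ⊗ₜ[ℂ] hinc P' Q' z t) = f y z (s ⊗ₜ t) :=
  sumTensorLift_lof f y z s t

end Products

/-! ### The exchange map and its retraction -/

/-- The exchange map `R`, sending the summand with index `((n₁,m₁),(n₂,m₂))`, `k`, `l` to the one
with indices `k + l`, `((n₁,k),(n₂,l))`, `((k,m₁),(l,m₂))` by permuting the tensor factors. -/
noncomputable def exchange (n m : ℕ) :
    Horiz (Vert C₁ C₂) (Vert C₃ C₄) n m →ₗ[ℂ] Vert (Horiz C₁ C₃) (Horiz C₂ C₄) n m :=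
  horizLift fun x => vertTensorLift fun k l =>
    vof (Horiz C₁ C₃) (Horiz C₂ C₄) n (k + l) m ∘ₗ
      TensorProduct.map
        (hinc C₁ C₃ ⟨((x.1.1.1, k), (x.1.2.1, l)), x.2.1, rfl⟩)
        (hinc C₂ C₄ ⟨((k, x.1.1.2), (l, x.1.2.2)), rfl, x.2.2⟩) ∘ₗ
      (TensorProduct.tensorTensorTensorComm ℂ _ _ _ _).toLinearMap

lemma exchange_apply {n m : ℕ} (x : HIdx n m) (k l : ℕ) (p₁ : C₁ x.1.1.1 k) (p₂ : C₂ k x.1.1.2)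
    (p₃ : C₃ x.1.2.1 l) (p₄ : C₄ l x.1.2.2) :
    exchange C₁ C₂ C₃ C₄ n m (hinc (Vert C₁ C₂) (Vert C₃ C₄) x
      (vof C₁ C₂ _ k _ (p₁ ⊗ₜ[ℂ] p₂) ⊗ₜ[ℂ] vof C₃ C₄ _ l _ (p₃ ⊗ₜ[ℂ] p₄))) =
    vof (Horiz C₁ C₃) (Horiz C₂ C₄) n (k + l) m
      (hinc C₁ C₃ ⟨((x.1.1.1, k), (x.1.2.1, l)), x.2.1, rfl⟩ (p₁ ⊗ₜ[ℂ] p₃) ⊗ₜ[ℂ]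
        hinc C₂ C₄ ⟨((k, x.1.1.2), (l, x.1.2.2)), rfl, x.2.2⟩ (p₂ ⊗ₜ[ℂ] p₄)) := by
  rw [exchange, horizLift_hinc, vertTensorLift_vof]
  rfl

/-- One component of the retraction: when the inner degrees match (`k = k'` and `l = l'`), permute
the tensor factors and include the result into `(C₁ ⊠ C₂) ⊗ (C₃ ⊠ C₄)`; otherwise zero. -/
noncomputable def retractPiece {n m : ℕ} (x : HIdx n m) (k l k' l' : ℕ) :
    (C₁ x.1.1.1 k ⊗[ℂ] C₃ x.1.2.1 l) ⊗[ℂ] (C₂ k' x.1.1.2 ⊗[ℂ] C₄ l' x.1.2.2) →ₗ[ℂ]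
      Horiz (Vert C₁ C₂) (Vert C₃ C₄) n m :=
  if h : k = k' ∧ l = l' then by
    obtain ⟨rfl, rfl⟩ := h
    exact hinc (Vert C₁ C₂) (Vert C₃ C₄) x ∘ₗ
      TensorProduct.map (vof C₁ C₂ _ k _) (vof C₃ C₄ _ l _) ∘ₗ
      (TensorProduct.tensorTensorTensorComm ℂ _ _ _ _).toLinearMap
  else 0

lemma retractPiece_tmul {n m : ℕ} (x : HIdx n m) (k l : ℕ) (p₁ : C₁ x.1.1.1 k)
    (p₂ : C₂ k x.1.1.2) (p₃ : C₃ x.1.2.1 l) (p₄ : C₄ l x.1.2.2) :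
    retractPiece C₁ C₂ C₃ C₄ x k l k l ((p₁ ⊗ₜ[ℂ] p₃) ⊗ₜ[ℂ] (p₂ ⊗ₜ[ℂ] p₄)) =
      hinc (Vert C₁ C₂) (Vert C₃ C₄) x
        (vof C₁ C₂ _ k _ (p₁ ⊗ₜ[ℂ] p₂) ⊗ₜ[ℂ] vof C₃ C₄ _ l _ (p₃ ⊗ₜ[ℂ] p₄)) := by
  rw [retractPiece, dif_pos ⟨rfl, rfl⟩]
  rfl

/-- A linear left inverse of `exchange`. -/
noncomputable def retract (n m : ℕ) :
    Vert (Horiz C₁ C₃) (Horiz C₂ C₄) n m →ₗ[ℂ] Horiz (Vert C₁ C₂) (Vert C₃ C₄) n m :=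
  vertLift fun _ => horizTensorLift fun y z =>
    retractPiece C₁ C₂ C₃ C₄
      ⟨((y.1.1.1, z.1.1.2), (y.1.2.1, z.1.2.2)), y.2.1, z.2.2⟩
      y.1.1.2 y.1.2.2 z.1.1.1 z.1.2.1

lemma retract_comp_exchange (n m : ℕ) :
    retract C₁ C₂ C₃ C₄ n m ∘ₗ exchange C₁ C₂ C₃ C₄ n m = LinearMap.id := by
  refine horiz_hom_ext fun x => vertTensor_hom_ext fun k l p₁ p₂ p₃ p₄ => ?_
  simp only [LinearMap.comp_apply, LinearMap.id_apply]
  rw [exchange_apply, retract, vertLift_vof]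
  refine (horizTensorLift_hinc _ _ _ _ _).trans ?_
  exact retractPiece_tmul C₁ C₂ C₃ C₄ x k l p₁ p₂ p₃ p₄

/-- Duoidal exchange law for bicollections: there is a (bidegree-wise
linear) morphism of bicollections
`R : (C₁ ⊠ C₂) ⊗ (C₃ ⊠ C₄) → (C₁ ⊗ C₃) ⊠ (C₂ ⊗ C₄)`
determined on homogeneous tensors by
`R((p₁ ⊠ p₂) ⊗ (p₃ ⊠ p₄)) = (p₁ ⊗ p₃) ⊠ (p₂ ⊗ p₄)`, and `R` is injective. -/
theorem exchange_law_exists_and_injective :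
    ∃ R : ∀ n m : ℕ, Horiz (Vert C₁ C₂) (Vert C₃ C₄) n m →ₗ[ℂ]
        Vert (Horiz C₁ C₃) (Horiz C₂ C₄) n m,
      (∀ (n₁ k₁ m₁ n₂ k₂ m₂ : ℕ) (p₁ : C₁ n₁ k₁) (p₂ : C₂ k₁ m₁)
          (p₃ : C₃ n₂ k₂) (p₄ : C₄ k₂ m₂),
        R (n₁ + n₂) (m₁ + m₂)
            (hof (Vert C₁ C₂) (Vert C₃ C₄) n₁ m₁ n₂ m₂
              (vof C₁ C₂ n₁ k₁ m₁ (p₁ ⊗ₜ[ℂ] p₂) ⊗ₜ[ℂ] vof C₃ C₄ n₂ k₂ m₂ (p₃ ⊗ₜ[ℂ] p₄))) =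
          vof (Horiz C₁ C₃) (Horiz C₂ C₄) (n₁ + n₂) (k₁ + k₂) (m₁ + m₂)
            (hof C₁ C₃ n₁ k₁ n₂ k₂ (p₁ ⊗ₜ[ℂ] p₃) ⊗ₜ[ℂ]
              hof C₂ C₄ k₁ m₁ k₂ m₂ (p₂ ⊗ₜ[ℂ] p₄))) ∧
      (∀ n m : ℕ, Function.Injective (R n m)) := by
  refine ⟨exchange C₁ C₂ C₃ C₄, fun n₁ k₁ m₁ n₂ k₂ m₂ p₁ p₂ p₃ p₄ =>
    exchange_apply C₁ C₂ C₃ C₄ ⟨((n₁, m₁), (n₂, m₂)), rfl, rfl⟩ k₁ k₂ p₁ p₂ p₃ p₄,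
    fun n m => ?_⟩
  exact Function.LeftInverse.injective (g := retract C₁ C₂ C₃ C₄ n m)
    (LinearMap.congr_fun (retract_comp_exchange C₁ C₂ C₃ C₄ n m))

end Bicollection
end

section
/- Characterization of interval cuts of a non-crossing partition: let π ∈ NC(n) have at least one block. Call a block V of π outer if V is not contained in Conv(W) for any other block W of π, and convex if V = Conv(V). Then: (i) a lowerset L of π has standalone partition an interval partition (with the convention that L = ∅ qualifies) if and only if L is a subset of the set of outer blocks of π; in particular there are exactly 2^m such lowersets, m being the number of outer blocks; (ii) a lowerset L of π has the property that every nonempty partition in its complementary upperset tuple (U₁,…,U_{p+1}) is an interval partition if and only if the complement of L in the set of blocks of π is a set of convex blocks of π; in particular there are exactly 2^c such lowersets, c being the number of convex blocks. -/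
open scoped Classical

/-- `x` lies in the convex hull `Conv(W) = [min W, max W]` of `W`. -/
def InConv (x : ℕ) (W : Finset ℕ) : Prop :=
  (∃ a ∈ W, a ≤ x) ∧ (∃ b ∈ W, x ≤ b)

/-- `V ⊆ Conv(W)`. -/
def SubConv (V W : Finset ℕ) : Prop := ∀ v ∈ V, InConv v W

/-- A lowerset of a partition `π`: a set `L` of blocks of `π` such that whenever
`V ∈ L` and `V ⊆ Conv(W)` for a block `W` of `π`, also `W ∈ L`. -/
def IsLowerset (π L : Finset (Finset ℕ)) : Prop :=
  L ⊆ π ∧ ∀ V ∈ L, ∀ W ∈ π, SubConv V W → W ∈ L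

/-- Order-preserving relabelling of a subset `V` of the linearly ordered set `S` onto an
initial segment of the positive integers: `x ↦ #{s ∈ S : s ≤ x}`. -/
def relabel (S : Finset ℕ) (V : Finset ℕ) : Finset ℕ :=
  V.image fun x => (S.filter (· ≤ x)).card

/-- The standalone partition of a set `L` of blocks: restrict to the points of `⋃ L`
and relabel order-preservingly. -/
def standalone (L : Finset (Finset ℕ)) : Finset (Finset ℕ) :=
  L.image (relabel (L.sup id))

/-- The `i`-th gap (`0`-indexed) of the subset `S` inside `[n]`: the elements of
`[n] ∖ S` with exactly `i` elements of `S` below them. -/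
def gapSet (n : ℕ) (S : Finset ℕ) (i : ℕ) : Finset ℕ :=
  (Finset.Icc 1 n \ S).filter fun x => (S.filter (· < x)).card = i

/-- The `i`-th member (`0`-indexed) of the complementary upperset tuple of a lowerset
`L` of `π`: the blocks of `π ∖ L` lying in the `i`-th gap of `⋃ L`, relabelled. -/
def compUpper (n : ℕ) (π L : Finset (Finset ℕ)) (i : ℕ) : Finset (Finset ℕ) :=
  ((π \ L).filter fun V => V ⊆ gapSet n (L.sup id) i).image
    (relabel (gapSet n (L.sup id) i))

/-- A block is convex if it equals its convex hull. -/
def IsConvexBlock (V : Finset ℕ) : Prop :=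
  ∀ x ∈ V, ∀ z ∈ V, ∀ y, x ≤ y → y ≤ z → y ∈ V

/-- An interval partition: all blocks are convex. -/
def IsIntervalPartition (π : Finset (Finset ℕ)) : Prop :=
  ∀ V ∈ π, IsConvexBlock V

/-- An outer block of `π`: a block not contained in the convex hull of any other block. -/
def IsOuterBlock (π : Finset (Finset ℕ)) (V : Finset ℕ) : Prop :=
  V ∈ π ∧ ∀ W ∈ π, W ≠ V → ¬ SubConv V W

/-- The relabelling map `x ↦ #{s ∈ S : s ≤ x}` is strictly increasing at points of `S`. -/
lemma rank_lt {S : Finset ℕ} {x y : ℕ} (hy : y ∈ S) (hxy : x < y) :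
    (S.filter (· ≤ x)).card < (S.filter (· ≤ y)).card := by
  apply Finset.card_lt_card
  rw [Finset.ssubset_iff_of_subset]
  · exact ⟨y, by simp [hy], by simp [hxy]⟩
  · intro s hs
    simp only [Finset.mem_filter] at hs ⊢
    exact ⟨hs.1, by omega⟩

lemma rank_mono (S : Finset ℕ) {x y : ℕ} (hxy : x ≤ y) :
    (S.filter (· ≤ x)).card ≤ (S.filter (· ≤ y)).card := by
  apply Finset.card_le_card
  intro s hs
  simp only [Finset.mem_filter] at hs ⊢
  exact ⟨hs.1, by omega⟩

/-- The relabelling map is onto `{1,…,|S|}`: it is injective on `S` with values in that set, so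
counting suffices. -/
lemma image_rank (S : Finset ℕ) :
    (S.image fun x => (S.filter (· ≤ x)).card) = Finset.Icc 1 S.card := by
  apply Finset.eq_of_subset_of_card_le
  · intro k hk
    obtain ⟨x, hx, rfl⟩ := Finset.mem_image.1 hk
    rw [Finset.mem_Icc]
    exact ⟨Finset.card_pos.2 ⟨x, by simp [hx]⟩, Finset.card_filter_le _ _⟩
  · rw [Finset.card_image_of_injOn]
    · simp
    · intro x hx y hy hxy
      simp only at hxy
      rcases lt_trichotomy x y with h | h | h
      · have := rank_lt (S := S) hy h
        omega
      · exact h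
      · have := rank_lt (S := S) hx h
        omega

/-- The relabelled block is an interval iff the original block is convex relative to `S`. -/
lemma isConvexBlock_relabel_iff {S V : Finset ℕ} (hVS : V ⊆ S) :
    IsConvexBlock (relabel S V) ↔
      ∀ x ∈ V, ∀ z ∈ V, ∀ y ∈ S, x ≤ y → y ≤ z → y ∈ V := by
  constructor
  · intro h x hx z hz y hy hxy hyz
    have hy' := h _ (Finset.mem_image_of_mem _ hx) _ (Finset.mem_image_of_mem _ hz) _
      (rank_mono S hxy) (rank_mono S hyz)
    obtain ⟨v, hv, hvy⟩ := Finset.mem_image.1 hy'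
    rcases lt_trichotomy v y with h | h | h
    · have := rank_lt hy h
      omega
    · exact h ▸ hv
    · have := rank_lt (hVS hv) h
      omega
  · intro h a ha b hb k hak hkb
    obtain ⟨x, hx, rfl⟩ := Finset.mem_image.1 ha
    obtain ⟨z, hz, rfl⟩ := Finset.mem_image.1 hb
    have hk : k ∈ S.image fun x => (S.filter (· ≤ x)).card := by
      rw [image_rank, Finset.mem_Icc]
      refine ⟨le_trans (Finset.card_pos.2 ⟨x, by simp [hVS hx]⟩) hak,
        hkb.trans (Finset.card_filter_le _ _)⟩
    obtain ⟨y, hy, rfl⟩ := Finset.mem_image.1 hk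
    refine Finset.mem_image_of_mem _ (h x hx z hz y hy ?_ ?_)
    · by_contra hlt
      have := rank_lt (hVS hx) (not_le.1 hlt)
      omega
    · by_contra hlt
      have := rank_lt hy (not_le.1 hlt)
      omega

lemma IsPartitionOn.eq_of_mem {n : ℕ} {π : Finset (Finset ℕ)} (hπ : IsPartitionOn n π)
    {V W : Finset ℕ} (hV : V ∈ π) (hW : W ∈ π) {x : ℕ} (hxV : x ∈ V) (hxW : x ∈ W) : V = W :=
  (hπ.2.2 x (hπ.2.1 V hV x hxV)).unique ⟨hV, hxV⟩ ⟨hW, hxW⟩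

/-- In a non-crossing partition, a block with one point between two points of another block `V`
is nested inside `V`. -/
lemma subConv_of_between {n : ℕ} {π : Finset (Finset ℕ)} (hπ : IsPartitionOn n π)
    (hnc : IsNoncrossing π) {U V : Finset ℕ} (hU : U ∈ π) (hV : V ∈ π) (hUV : U ≠ V)
    {x y z : ℕ} (hx : x ∈ V) (hz : z ∈ V) (hy : y ∈ U) (hxy : x ≤ y) (hyz : y ≤ z) :
    SubConv U V := by
  have hxy' : x < y := lt_of_le_of_ne hxy fun h => hUV (hπ.eq_of_mem hU hV hy (h ▸ hx))
  have hyz' : y < z := lt_of_le_of_ne hyz fun h => hUV (hπ.eq_of_mem hU hV hy (h ▸ hz))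
  intro u hu
  constructor
  · by_contra! h
    exact hnc U hU V hV hUV u hu y hy x hx z hz ⟨h x hx, hxy', hyz'⟩
  · by_contra! h
    exact hnc V hV U hU hUV.symm x hx z hz y hy u hu ⟨hxy', hyz', h z hz⟩

lemma mem_sup_id {L : Finset (Finset ℕ)} {x : ℕ} : x ∈ L.sup id ↔ ∃ V ∈ L, x ∈ V := by
  simp [Finset.mem_sup]

lemma isIntervalPartition_standalone_iff {n : ℕ} {π L : Finset (Finset ℕ)}
    (hπ : IsPartitionOn n π) (hnc : IsNoncrossing π) (hL : IsLowerset π L) :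
    IsIntervalPartition (standalone L) ↔ ∀ V ∈ L, IsOuterBlock π V := by
  have hsub : ∀ V ∈ L, V ⊆ L.sup id := fun V hV x hx => mem_sup_id.2 ⟨V, hV, hx⟩
  constructor
  · intro h V hV
    refine ⟨hL.1 hV, fun W hW hWV hVW => hWV ?_⟩
    have hWL := hL.2 V hV W hW hVW
    have hc := (isConvexBlock_relabel_iff (hsub W hWL)).1 (h _ (Finset.mem_image_of_mem _ hWL))
    obtain ⟨v, hv⟩ := hπ.1 V (hL.1 hV)
    obtain ⟨⟨a, ha, hav⟩, ⟨b, hb, hvb⟩⟩ := hVW v hv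
    exact hπ.eq_of_mem hW (hL.1 hV) (hc a ha b hb v (hsub V hV hv) hav hvb) hv
  · intro h B hB
    obtain ⟨V, hV, rfl⟩ := Finset.mem_image.1 hB
    refine (isConvexBlock_relabel_iff (hsub V hV)).2 fun x hx z hz y hy hxy hyz => ?_
    obtain ⟨U, hU, hyU⟩ := mem_sup_id.1 hy
    by_cases hUV : U = V
    · exact hUV ▸ hyU
    · exact absurd (subConv_of_between hπ hnc (hL.1 hU) (hL.1 hV) hUV hx hz hyU hxy hyz)
        ((h U hU).2 V (hL.1 hV) (Ne.symm hUV))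

/-- No point of `⋃ L` lies between two points of a block outside the lowerset `L`. -/
lemma notMem_sup_of_between {n : ℕ} {π L : Finset (Finset ℕ)}
    (hπ : IsPartitionOn n π) (hnc : IsNoncrossing π) (hL : IsLowerset π L)
    {V : Finset ℕ} (hV : V ∈ π) (hVL : V ∉ L) {x y z : ℕ} (hx : x ∈ V) (hz : z ∈ V)
    (hxy : x ≤ y) (hyz : y ≤ z) : y ∉ L.sup id := by
  intro hy
  obtain ⟨U, hU, hyU⟩ := mem_sup_id.1 hy
  have hUV : U ≠ V := fun h => hVL (h ▸ hU)
  exact hVL (hL.2 U hU V hV (subConv_of_between hπ hnc (hL.1 hU) hV hUV hx hz hyU hxy hyz))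

/-- All points of `[n]` lying between two points of a block `V ∉ L` lie in one gap of `⋃ L`: the gap
containing `v`, for any `v ∈ V`. -/
lemma subset_gapSet_of_between {n : ℕ} {π L : Finset (Finset ℕ)}
    (hπ : IsPartitionOn n π) (hnc : IsNoncrossing π) (hL : IsLowerset π L)
    {V : Finset ℕ} (hV : V ∈ π) (hVL : V ∉ L) {v x y z : ℕ} (hv : v ∈ V)
    (hx : x ∈ V) (hz : z ∈ V) (hxy : x ≤ y) (hyz : y ≤ z) :
    y ∈ gapSet n (L.sup id) (((L.sup id).filter (· < v)).card) := by
  have hno := fun {x y z : ℕ} => notMem_sup_of_between hπ hnc hL hV hVL (x := x) (y := y) (z := z)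
  have hx1 := Finset.mem_Icc.1 (hπ.2.1 V hV x hx)
  have hz1 := Finset.mem_Icc.1 (hπ.2.1 V hV z hz)
  simp only [gapSet, Finset.mem_filter, Finset.mem_sdiff, Finset.mem_Icc]
  refine ⟨⟨by omega, hno hx hz hxy hyz⟩, ?_⟩
  congr 1
  ext s
  simp only [Finset.mem_filter, and_congr_right_iff]
  intro hs
  constructor
  · intro hsy
    by_contra hvs
    exact hno hv hz (not_lt.1 hvs) (by omega) hs
  · intro hsv
    by_contra hys
    exact hno hx hv (by omega) hsv.le hs

lemma isIntervalPartition_compUpper_iff {n : ℕ} {π L : Finset (Finset ℕ)}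
    (hπ : IsPartitionOn n π) (hnc : IsNoncrossing π) (hL : IsLowerset π L) :
    (∀ i ≤ (L.sup id).card, IsIntervalPartition (compUpper n π L i)) ↔
      ∀ V ∈ π \ L, IsConvexBlock V := by
  constructor
  · intro h V hV x hx z hz y hxy hyz
    obtain ⟨hVπ, hVL⟩ := Finset.mem_sdiff.1 hV
    have hgap := fun {x y z : ℕ} => subset_gapSet_of_between hπ hnc hL hVπ hVL hx
      (x := x) (y := y) (z := z)
    have hVg : V ⊆ gapSet n (L.sup id) (((L.sup id).filter (· < x)).card) :=
      fun w hw => hgap hw hw le_rfl le_rfl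
    have hmem : relabel (gapSet n (L.sup id) (((L.sup id).filter (· < x)).card)) V ∈
        compUpper n π L (((L.sup id).filter (· < x)).card) :=
      Finset.mem_image_of_mem _ (Finset.mem_filter.2 ⟨hV, hVg⟩)
    exact (isConvexBlock_relabel_iff hVg).1 (h _ (Finset.card_filter_le _ _) _ hmem)
      x hx z hz y (hgap hx hz hxy hyz) hxy hyz
  · intro h i _ B hB
    obtain ⟨V, hV, rfl⟩ := Finset.mem_image.1 hB
    obtain ⟨hV, hVg⟩ := Finset.mem_filter.1 hV
    exact (isConvexBlock_relabel_iff hVg).2 fun x hx z hz y _ => h V hV x hx z hz y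

lemma isLowerset_of_outer {π L : Finset (Finset ℕ)} (h : ∀ V ∈ L, IsOuterBlock π V) :
    IsLowerset π L := by
  refine ⟨fun V hV => (h V hV).1, fun V hV W hW hVW => ?_⟩
  by_contra hWL
  exact (h V hV).2 W hW (fun e => hWL (e ▸ hV)) hVW

lemma isLowerset_of_sdiff_convex {n : ℕ} {π L : Finset (Finset ℕ)} (hπ : IsPartitionOn n π)
    (hL : L ⊆ π) (h : ∀ V ∈ π \ L, IsConvexBlock V) : IsLowerset π L := by
  refine ⟨hL, fun V hV W hW hVW => ?_⟩
  by_contra hWL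
  obtain ⟨v, hv⟩ := hπ.1 V (hL hV)
  obtain ⟨⟨a, ha, hav⟩, ⟨b, hb, hvb⟩⟩ := hVW v hv
  have hvW := h W (Finset.mem_sdiff.2 ⟨hW, hWL⟩) a ha b hb v hav hvb
  exact hWL (hπ.eq_of_mem (hL hV) hW hv hvW ▸ hV)

/-- **Statement 9.** Characterization of interval cuts of a non-crossing partition
`π ∈ NC(n)` with at least one block:
(i) a lowerset `L` has standalone partition an interval partition iff `L` consists of
outer blocks; there are exactly `2^m` such lowersets, `m` the number of outer blocks;
(ii) a lowerset `L` has all (nonempty) members of its complementary upperset tuple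
interval partitions iff the blocks of `π` outside `L` are all convex; there are exactly
`2^c` such lowersets, `c` the number of convex blocks. -/
theorem interval_cuts_characterization (n : ℕ) (π : Finset (Finset ℕ))
    (hπ : IsPartitionOn n π) (hnc : IsNoncrossing π) (hne : π.Nonempty) :
    ((∀ L, IsLowerset π L →
        (IsIntervalPartition (standalone L) ↔ ∀ V ∈ L, IsOuterBlock π V)) ∧
      {L : Finset (Finset ℕ) |
          IsLowerset π L ∧ IsIntervalPartition (standalone L)}.ncard =
        2 ^ {V : Finset ℕ | IsOuterBlock π V}.ncard) ∧
    ((∀ L, IsLowerset π L →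
        ((∀ i ≤ (L.sup id).card, IsIntervalPartition (compUpper n π L i)) ↔
          ∀ V ∈ π \ L, IsConvexBlock V)) ∧
      {L : Finset (Finset ℕ) |
          IsLowerset π L ∧
            ∀ i ≤ (L.sup id).card, IsIntervalPartition (compUpper n π L i)}.ncard =
        2 ^ {V : Finset ℕ | V ∈ π ∧ IsConvexBlock V}.ncard) := by
  refine ⟨⟨fun L hL => isIntervalPartition_standalone_iff hπ hnc hL, ?_⟩,
    fun L hL => isIntervalPartition_compUpper_iff hπ hnc hL, ?_⟩
  · have hO : {V : Finset ℕ | IsOuterBlock π V} = ↑(π.filter (IsOuterBlock π)) := by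
      ext V
      simp only [Set.mem_ofPred_eq, Finset.coe_filter]
      exact ⟨fun h => ⟨h.1, h⟩, fun h => h.2⟩
    have hS : {L : Finset (Finset ℕ) | IsLowerset π L ∧ IsIntervalPartition (standalone L)} =
        ↑(π.filter (IsOuterBlock π)).powerset := by
      ext L
      simp only [Set.mem_ofPred_eq, Finset.mem_coe, Finset.mem_powerset]
      constructor
      · rintro ⟨hL, hI⟩ V hV
        exact Finset.mem_filter.2
          ⟨hL.1 hV, (isIntervalPartition_standalone_iff hπ hnc hL).1 hI V hV⟩
      · intro h
        have h' : ∀ V ∈ L, IsOuterBlock π V := fun V hV => (Finset.mem_filter.1 (h hV)).2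
        have hL := isLowerset_of_outer h'
        exact ⟨hL, (isIntervalPartition_standalone_iff hπ hnc hL).2 h'⟩
    rw [hS, hO, Set.ncard_coe_finset, Set.ncard_coe_finset, Finset.card_powerset]
  · have hC : {V : Finset ℕ | V ∈ π ∧ IsConvexBlock V} = ↑(π.filter IsConvexBlock) := by
      ext V
      simp
    -- Complementation in `π` turns these lowersets into the sets of convex blocks.
    have hS : {L : Finset (Finset ℕ) | IsLowerset π L ∧
          ∀ i ≤ (L.sup id).card, IsIntervalPartition (compUpper n π L i)} =
        ↑((π.filter IsConvexBlock).powerset.image fun C => π \ C) := by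
      ext L
      simp only [Set.mem_ofPred_eq, Finset.mem_coe, Finset.mem_image, Finset.mem_powerset]
      constructor
      · rintro ⟨hL, hI⟩
        refine ⟨π \ L, fun V hV => Finset.mem_filter.2 ⟨(Finset.mem_sdiff.1 hV).1,
          (isIntervalPartition_compUpper_iff hπ hnc hL).1 hI V hV⟩, ?_⟩
        exact Finset.sdiff_sdiff_eq_self hL.1
      · rintro ⟨C, hCsub, rfl⟩
        have h' : ∀ V ∈ π \ (π \ C), IsConvexBlock V := by
          intro V hV
          rw [Finset.sdiff_sdiff_eq_self (hCsub.trans (Finset.filter_subset _ _))] at hV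
          exact (Finset.mem_filter.1 (hCsub hV)).2
        have hL := isLowerset_of_sdiff_convex hπ Finset.sdiff_subset h'
        exact ⟨hL, (isIntervalPartition_compUpper_iff hπ hnc hL).2 h'⟩
    rw [hS, hC, Set.ncard_coe_finset, Set.ncard_coe_finset, Finset.card_image_of_injOn,
      Finset.card_powerset]
    intro C hC D hD hCD
    have hC' := (Finset.mem_powerset.1 hC).trans (Finset.filter_subset _ _)
    have hD' := (Finset.mem_powerset.1 hD).trans (Finset.filter_subset _ _)
    simp only at hCD
    rw [← Finset.sdiff_sdiff_eq_self hC', hCD, Finset.sdiff_sdiff_eq_self hD']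
end
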